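/- arXiv:1312.7241 — 2 statements merged into one kernel-verified Lean document; each statement's English description precedes it below -/
import Mathlib

section
/- Let R ∈ ℝ, let m be a positive integer, set β = -(R-8)/2, and let (T, f) solve the Duffing boundary value problem for (m, β). Then the volume of the associated constant scalar curvature metric, Vol = (2π²/m)·∫_{-T}^{T} f(t) dt, equals 4√2·π²·arcsin(k)/m, and consequently the value of the Yamabe functional R·√(Vol) equals 2·2^{1/4}·π·R·√(arcsin(k)/m), where k = √((1 + β/√(2m² + β²))/2). -/
/-!
For a solution `f` on `[a, b]` vanishing at both ends with `f'(a) = m`, write `φ(t) = √2 ∫_a^t f`.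
The Duffing equation says that `z = (f² - β) + i√2 f'` satisfies `z' = -iφ' z`, so
`z = exp(-iφ) z(a)`. Put `D = |z(a)|` and `θ = arg z(a) ∈ (0, π)`. Taking real parts, and using
`f(a) = 0`,

  `f² = D (cos (θ - φ) - cos θ)`,

whose first zero with `φ > 0` is at `φ = 2θ`. Since `f > 0` inside the interval, the increasing
phase `φ` reaches `2θ` exactly at `b`, so `√2 ∫ f = 2θ`. Finally `z(a) = -β + i√2 m`, and the
half-angle formula gives `θ = 2 arcsin k`.
-/

open Real

/-- The Duffing boundary value problem for `(m, β)`: a time `T > 0` and a `C^∞` function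
`f` with `f'' = -f³ + β·f` on `[-T, T]`, boundary values `f(±T) = 0`,
`f'(-T) = m`, `f'(T) = -m`, and `f > 0` on `(-T, T)`. -/
def IsDuffingSolution (m : ℕ) (β T : ℝ) (f : ℝ → ℝ) : Prop :=
  0 < T ∧ ContDiff ℝ (⊤ : ℕ∞) f ∧
    (∀ t ∈ Set.Icc (-T) T, deriv (deriv f) t = -(f t) ^ 3 + β * f t) ∧
    f (-T) = 0 ∧ f T = 0 ∧ deriv f (-T) = (m : ℝ) ∧ deriv f T = -(m : ℝ) ∧
    (∀ t ∈ Set.Ioo (-T) T, 0 < f t)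


/-- The elliptic modulus `k = √((1 + β/√(2m² + β²))/2)` associated to `(m, β)`. -/
noncomputable def duffingModulus (m : ℕ) (β : ℝ) : ℝ :=
  Real.sqrt ((1 + β / Real.sqrt (2 * (m : ℝ) ^ 2 + β ^ 2)) / 2)

/-- `f` solves the Duffing equation `f'' = -f³ + β f` on `s`, with derivative `f'`. Derivatives are
taken within `s`, so on a closed interval they are one-sided at the endpoints. -/
structure SolvesDuffingOn (β : ℝ) (f f' : ℝ → ℝ) (s : Set ℝ) : Prop where
  hasDerivWithinAt : ∀ t ∈ s, HasDerivWithinAt f (f' t) s t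
  hasDerivWithinAt_deriv : ∀ t ∈ s, HasDerivWithinAt f' (-f t ^ 3 + β * f t) s t

/-- The vector `(f² - β, √2 f')`, as a complex number, which the Duffing equation rotates with
angular velocity `-√2 f`. -/
@[simps]
noncomputable def duffingVector (β : ℝ) (f f' : ℝ → ℝ) (t : ℝ) : ℂ where
  re := f t ^ 2 - β
  im := √2 * f' t

theorem eq_exp_sub_smul_of_hasDerivWithinAt {E : Type*} [NormedAddCommGroup E] [NormedSpace ℝ E]
    [NormedSpace ℂ E] [IsScalarTower ℝ ℂ E] {θ θ' : ℝ → ℂ} {z : ℝ → E} {a b t : ℝ}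
    (hθ : ∀ t ∈ Set.Icc a b, HasDerivWithinAt θ (θ' t) (Set.Icc a b) t)
    (hz : ∀ t ∈ Set.Icc a b, HasDerivWithinAt z (θ' t • z t) (Set.Icc a b) t)
    (ht : t ∈ Set.Icc a b) : z t = Complex.exp (θ t - θ a) • z a := by
  have hderiv (s : ℝ) (hs : s ∈ Set.Icc a b) :
      HasDerivWithinAt (fun s ↦ Complex.exp (-θ s) • z s) 0 (Set.Icc a b) s := by
    refine ((hθ s hs).fun_neg.cexp.smul (hz s hs)).congr_deriv ?_
    module
  have hconst : Complex.exp (-θ t) • z t = Complex.exp (-θ a) • z a :=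
    constant_of_derivWithin_zero (fun s hs ↦ (hderiv s hs).differentiableWithinAt)
      (fun s hs ↦ (hderiv s ⟨hs.1, hs.2.le⟩).derivWithin
        (uniqueDiffOn_Icc (hs.1.trans_lt hs.2) s ⟨hs.1, hs.2.le⟩)) t ht
  rw [sub_eq_add_neg, Complex.exp_add, mul_smul, ← hconst, smul_smul, ← Complex.exp_add,
    add_neg_cancel, Complex.exp_zero, one_smul]

theorem hasDerivWithinAt_integral_Icc {E : Type*} [NormedAddCommGroup E] [NormedSpace ℝ E]
    [CompleteSpace E] {f : ℝ → E} {a b t : ℝ} (hf : ContinuousOn f (Set.Icc a b))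
    (ht : t ∈ Set.Icc a b) :
    HasDerivWithinAt (fun u ↦ ∫ s in a..u, f s) (f t) (Set.Icc a b) t := by
  have : Fact (t ∈ Set.Icc a b) := ⟨ht⟩
  exact intervalIntegral.integral_hasDerivWithinAt_right
    ((hf.mono (Set.Icc_subset_Icc_right ht.2)).intervalIntegrable_of_Icc ht.1)
    (hf.stronglyMeasurableAtFilter_nhdsWithin measurableSet_Icc t) (hf t ht)

theorem two_mul_arcsin_sqrt_eq_arg {z : ℂ} (him : 0 ≤ z.im) (hz : z ≠ 0) :
    2 * arcsin √((1 - z.re / ‖z‖) / 2) = z.arg := by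
  have harg := Complex.arg_nonneg_iff.2 him
  rw [← Complex.cos_arg hz, ← sin_half_eq_sqrt harg (by linarith [Complex.arg_le_pi z, pi_pos]),
    arcsin_sin (by linarith [pi_pos]) (by linarith [Complex.arg_le_pi z])]
  ring

theorem eq_two_mul_of_cos_sub_eq {φ : ℝ → ℝ} {a b θ : ℝ} (hab : a ≤ b)
    (hφ : ContinuousOn φ (Set.Icc a b)) (ha : φ a = 0) (hb : 0 < φ b) (hθ : θ ∈ Set.Ioc 0 π)
    (hne : ∀ t ∈ Set.Ioo a b, cos (θ - φ t) ≠ cos θ) (heq : cos (θ - φ b) = cos θ) :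
    φ b = 2 * θ := by
  have hle : φ b ≤ 2 * θ := by
    by_contra! hlt
    obtain ⟨t, ht, hφt⟩ := intermediate_value_Ioo hab hφ
      (show 2 * θ ∈ Set.Ioo (φ a) (φ b) from ⟨by linarith [hθ.1], hlt⟩)
    exact hne t ht (by rw [hφt, ← cos_neg]; ring_nf)
  have habs : |θ - φ b| ≤ θ := abs_le.2 ⟨by linarith, by linarith⟩
  have hθb : |θ - φ b| = θ :=
    injOn_cos ⟨abs_nonneg _, habs.trans hθ.2⟩ ⟨hθ.1.le, hθ.2⟩ (by rw [cos_abs, heq])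
  rcases eq_or_eq_neg_of_abs_eq hθb with h | h <;> linarith

theorem duffingVector_ne_zero {β t : ℝ} {f f' : ℝ → ℝ} (h : f' t ≠ 0) :
    duffingVector β f f' t ≠ 0 :=
  fun hz ↦ mul_ne_zero (sqrt_ne_zero'.2 two_pos) h (congrArg Complex.im hz)

theorem arg_duffingVector_of_eq_zero {β t : ℝ} {f f' : ℝ → ℝ} (h : f t = 0) (h' : 0 < f' t) :
    (duffingVector β f f' t).arg = 2 * arcsin √((1 + β / √(2 * f' t ^ 2 + β ^ 2)) / 2) := by
  have him : 0 < (duffingVector β f f' t).im := mul_pos (by positivity) h'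
  have hnorm : ‖duffingVector β f f' t‖ = √(2 * f' t ^ 2 + β ^ 2) := by
    rw [Complex.norm_eq_sqrt_sq_add_sq, duffingVector_re, duffingVector_im, h, mul_pow,
      sq_sqrt zero_le_two]
    ring_nf
  rw [← two_mul_arcsin_sqrt_eq_arg him.le (duffingVector_ne_zero h'.ne'), hnorm,
    duffingVector_re, h]
  ring_nf

namespace SolvesDuffingOn

variable {β a b t : ℝ} {f f' : ℝ → ℝ}

theorem continuousOn {s : Set ℝ} (h : SolvesDuffingOn β f f' s) : ContinuousOn f s :=
  fun t ht ↦ (h.hasDerivWithinAt t ht).continuousWithinAt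

theorem hasDerivWithinAt_duffingVector {s : Set ℝ} (h : SolvesDuffingOn β f f' s) (ht : t ∈ s) :
    HasDerivWithinAt (duffingVector β f f')
      (-((√2 * f t : ℝ) * Complex.I) • duffingVector β f f' t) s t := by
  have hre := (((h.hasDerivWithinAt t ht).fun_pow 2).sub_const β).ofReal_comp
  have him := ((h.hasDerivWithinAt_deriv t ht).const_mul √2).ofReal_comp.mul_const Complex.I
  have hsqrt : (√2 : ℂ) ^ 2 = 2 := by exact_mod_cast sq_sqrt (zero_le_two (α := ℝ))
  have hvec (u : ℝ) := Complex.mk_eq_add_mul_I (f u ^ 2 - β) (√2 * f' u)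
  refine ((hre.add him).congr_deriv ?_).congr (fun u _ ↦ hvec u) (hvec t)
  rw [duffingVector, hvec, smul_eq_mul]
  push_cast
  linear_combination (√2 : ℂ) ^ 2 * f t * f' t * Complex.I_sq - (f t * f' t : ℂ) * hsqrt

theorem duffingVector_eq (h : SolvesDuffingOn β f f' (Set.Icc a b)) (ht : t ∈ Set.Icc a b) :
    duffingVector β f f' t = ‖duffingVector β f f' a‖ *
      Complex.exp (((duffingVector β f f' a).arg - √2 * ∫ s in a..t, f s : ℝ) * Complex.I) := by
  have hphase (u : ℝ) (hu : u ∈ Set.Icc a b) :=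
    ((hasDerivWithinAt_integral_Icc h.continuousOn hu).const_mul √2).ofReal_comp.mul_const
      Complex.I |>.fun_neg
  have hrot := eq_exp_sub_smul_of_hasDerivWithinAt hphase
    (fun u hu ↦ h.hasDerivWithinAt_duffingVector hu) ht
  simp only [intervalIntegral.integral_same, mul_zero, Complex.ofReal_zero, zero_mul, neg_zero,
    sub_zero] at hrot
  rw [hrot, smul_eq_mul, Complex.ofReal_sub, sub_mul, sub_eq_neg_add, Complex.exp_add,
    mul_left_comm, Complex.norm_mul_exp_arg_mul_I]

theorem sq_sub_eq_norm_mul_cos (h : SolvesDuffingOn β f f' (Set.Icc a b)) (ht : t ∈ Set.Icc a b) :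
    f t ^ 2 - β = ‖duffingVector β f f' a‖ *
      cos ((duffingVector β f f' a).arg - √2 * ∫ s in a..t, f s) := by
  have hre := congrArg Complex.re (h.duffingVector_eq ht)
  rw [Complex.re_ofReal_mul, Complex.exp_ofReal_mul_I_re] at hre
  exact hre

theorem eq_zero_iff_cos_sub_eq (h : SolvesDuffingOn β f f' (Set.Icc a b)) (ha : f a = 0)
    (hz : duffingVector β f f' a ≠ 0) (ht : t ∈ Set.Icc a b) :
    f t = 0 ↔ cos ((duffingVector β f f' a).arg - √2 * ∫ s in a..t, f s) =
      cos (duffingVector β f f' a).arg := by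
  have hinit : ‖duffingVector β f f' a‖ * cos (duffingVector β f f' a).arg = -β := by
    rw [Complex.norm_mul_cos_arg, duffingVector_re, ha]
    ring
  rw [← mul_right_inj' (b := cos (_ - _)) (norm_ne_zero_iff.2 hz), ← h.sq_sub_eq_norm_mul_cos ht,
    hinit, sub_eq_neg_self, sq_eq_zero_iff]

theorem sqrt_two_mul_integral_eq (h : SolvesDuffingOn β f f' (Set.Icc a b)) (hab : a < b)
    (ha : f a = 0) (hb : f b = 0) (ha' : 0 < f' a) (hpos : ∀ t ∈ Set.Ioo a b, 0 < f t) :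
    √2 * ∫ t in a..b, f t = 2 * (duffingVector β f f' a).arg := by
  have hφ (t : ℝ) (ht : t ∈ Set.Icc a b) :=
    ((hasDerivWithinAt_integral_Icc h.continuousOn ht).const_mul √2).continuousWithinAt
  have hφb : 0 < √2 * ∫ t in a..b, f t := mul_pos (by positivity)
    (intervalIntegral.intervalIntegral_pos_of_pos_on
      (h.continuousOn.intervalIntegrable_of_Icc hab.le) hpos hab)
  have him : 0 < (duffingVector β f f' a).im := mul_pos (by positivity) ha'
  have hθ : (duffingVector β f f' a).arg ∈ Set.Ioc 0 π :=
    ⟨(Complex.arg_nonneg_iff.2 him.le).lt_of_ne' fun h0 ↦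
      him.ne' (Complex.arg_eq_zero_iff.1 h0).2, Complex.arg_le_pi _⟩
  have hzero (t : ℝ) (ht : t ∈ Set.Icc a b) :=
    h.eq_zero_iff_cos_sub_eq ha (duffingVector_ne_zero ha'.ne') ht
  exact eq_two_mul_of_cos_sub_eq (φ := fun t ↦ √2 * ∫ s in a..t, f s) hab.le hφ (by simp) hφb hθ
    (fun t ht hcos ↦ (hpos t ht).ne' ((hzero t (Set.Ioo_subset_Icc_self ht)).2 hcos))
    ((hzero b (Set.right_mem_Icc.2 hab.le)).1 hb)

theorem integral_eq (h : SolvesDuffingOn β f f' (Set.Icc a b)) (hab : a < b)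
    (ha : f a = 0) (hb : f b = 0) (ha' : 0 < f' a) (hpos : ∀ t ∈ Set.Ioo a b, 0 < f t) :
    ∫ t in a..b, f t = 2 * √2 * arcsin √((1 + β / √(2 * f' a ^ 2 + β ^ 2)) / 2) := by
  have hphase := h.sqrt_two_mul_integral_eq hab ha hb ha' hpos
  rw [arg_duffingVector_of_eq_zero ha ha'] at hphase
  have hsqrt : √2 * √2 = 2 := mul_self_sqrt zero_le_two
  linear_combination (√2 / 2) * hphase - (∫ t in a..b, f t) / 2 * hsqrt

end SolvesDuffingOn

theorem IsDuffingSolution.solvesDuffingOn {m : ℕ} {β T : ℝ} {f : ℝ → ℝ}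
    (h : IsDuffingSolution m β T f) : SolvesDuffingOn β f (deriv f) (Set.Icc (-T) T) where
  hasDerivWithinAt t _ :=
    (h.2.1.differentiable (by simp) t).hasDerivAt.hasDerivWithinAt
  hasDerivWithinAt_deriv t ht := by
    have hdiff : Differentiable ℝ (deriv f) :=
      (contDiff_infty_iff_deriv.1 h.2.1).2.differentiable (by simp)
    exact h.2.2.1 t ht ▸ (hdiff t).hasDerivAt.hasDerivWithinAt

theorem sqrt_two_mul_pi_sq_div_mul (m α : ℝ) :
    √(2 * π ^ 2 / m * (2 * √2 * α)) = 2 * (2 : ℝ) ^ ((1 : ℝ) / 4) * π * √(α / m) := by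
  have hroot : ((2 : ℝ) ^ ((1 : ℝ) / 4)) ^ 2 = √2 := by
    rw [← rpow_mul_natCast zero_le_two, sqrt_eq_rpow]
    norm_num
  have hsq : 2 * π ^ 2 / m * (2 * √2 * α) =
      (2 * (2 : ℝ) ^ ((1 : ℝ) / 4) * π) ^ 2 * (α / m) := by
    rw [mul_pow, mul_pow, hroot]
    ring
  rw [hsq, sqrt_mul (by positivity), sqrt_sq (by positivity)]

theorem volume_and_yamabe_value_general {m : ℝ} (hm : 0 < m) (R : ℝ) {a b : ℝ} {f f' : ℝ → ℝ}
    (hab : a < b) (h : SolvesDuffingOn (-(R - 8) / 2) f f' (Set.Icc a b))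
    (ha : f a = 0) (hb : f b = 0) (ha' : f' a = m) (hpos : ∀ t ∈ Set.Ioo a b, 0 < f t) :
    (2 * π ^ 2 / m) * ∫ t in a..b, f t
      = 4 * √2 * π ^ 2 *
          arcsin √((1 + -(R - 8) / 2 / √(2 * m ^ 2 + (-(R - 8) / 2) ^ 2)) / 2) / m ∧
    R * √((2 * π ^ 2 / m) * ∫ t in a..b, f t)
      = 2 * (2 : ℝ) ^ ((1 : ℝ) / 4) * π * R *
          √(arcsin √((1 + -(R - 8) / 2 / √(2 * m ^ 2 + (-(R - 8) / 2) ^ 2)) / 2) / m) := by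
  subst ha'
  rw [h.integral_eq hab ha hb hm hpos, sqrt_two_mul_pi_sq_div_mul]
  constructor <;> ring

/-- Volume and Yamabe functional value of the constant scalar curvature metric `g_m(R)`. -/
theorem volume_and_yamabe_value (m : ℕ) (hm : 0 < m) (R T : ℝ) (f : ℝ → ℝ)
    (h : IsDuffingSolution m (-(R - 8) / 2) T f) :
    (2 * π ^ 2 / (m : ℝ)) * ∫ t in (-T)..T, f t
      = 4 * Real.sqrt 2 * π ^ 2 * Real.arcsin (duffingModulus m (-(R - 8) / 2)) / (m : ℝ) ∧
    R * Real.sqrt ((2 * π ^ 2 / (m : ℝ)) * ∫ t in (-T)..T, f t)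
      = 2 * (2 : ℝ) ^ ((1 : ℝ) / 4) * π * R *
          Real.sqrt (Real.arcsin (duffingModulus m (-(R - 8) / 2)) / (m : ℝ)) := by
  have hf := h.solvesDuffingOn
  obtain ⟨hT, -, -, hfl, hfr, hslope, -, hpos⟩ := h
  exact volume_and_yamabe_value_general (Nat.cast_pos.2 hm) R (neg_lt_self hT) hf hfl hfr hslope
    hpos
end

section
/- Let R, t ∈ ℝ, let m be a positive integer, set β = -(R-8)/2, and let (T, f) solve the Duffing boundary value problem for (m, β). Then (2π²/m)·∫_{-T}^{T} f(s)·[ (R² - 12·f(s)²·R + 144·f'(s)² + 36·f(s)⁴)/3 + t·R² ] ds = (2π²/m)·(72m² + ((6t+59)/3)·R² - 272R + 960)·√2·arcsin(k) - 4π²·(19R - 120), where k = √((1 + β/√(2m² + β²))/2). -/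
/-!
In the phase plane put `z = (f² - β) + √2 f' i`. The Duffing equation becomes the linear equation
`z' = -√2 f i z`, so `z` moves on a circle about `0`, and in time `s` it turns clockwise by the
angle `√2 ∫ f`. An arc starts at `z₀ = -β + √2 v i` and stops when the real part of `z` is again
`-β`, that is, at `conj z₀`; it has no time for additional turns because `f > 0` keeps the real
part away from `-β` before. Hence `√2 ∫ f = 2 arg z₀`, and the half-angle formula for the sine
shows `arg z₀ = 2 arcsin k`.

Constancy of `|z|` is conservation of energy. It makes the integrand of the functional an odd
quintic polynomial in `f`, and integrating `f''` and `(f² f')'` reduces `∫ f³` and `∫ f⁵` to `∫ f`.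
-/

open Real

section Calculus

variable {E : Type*} [NormedAddCommGroup E] [NormedSpace ℝ E] [CompleteSpace E] {a b : ℝ}

theorem hasDerivWithinAt_integral_Icc_s12 {c : ℝ → E} (hc : ContinuousOn c (Set.Icc a b)) {s : ℝ}
    (hs : s ∈ Set.Icc a b) :
    HasDerivWithinAt (fun u => ∫ x in a..u, c x) (c s) (Set.Icc a b) s := by
  have : Fact (s ∈ Set.Icc a b) := ⟨hs⟩
  have hint : IntervalIntegrable c MeasureTheory.volume a s :=
    (hc.mono (Set.Icc_subset_Icc_right hs.2)).intervalIntegrable_of_Icc hs.1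
  exact intervalIntegral.integral_hasDerivWithinAt_right hint
    (hc.stronglyMeasurableAtFilter_nhdsWithin measurableSet_Icc s) (hc s hs)

theorem integral_eq_sub_of_hasDerivWithinAt_Icc {g g' : ℝ → E} (hab : a ≤ b)
    (hg : ∀ s ∈ Set.Icc a b, HasDerivWithinAt g (g' s) (Set.Icc a b) s)
    (hint : IntervalIntegrable g' MeasureTheory.volume a b) :
    ∫ s in a..b, g' s = g b - g a :=
  intervalIntegral.integral_eq_sub_of_hasDerivAt_of_le hab
    (fun s hs => (hg s hs).continuousWithinAt)
    (fun s hs => (hg s (Set.Ioo_subset_Icc_self hs)).hasDerivAt (Icc_mem_nhds hs.1 hs.2)) hint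

theorem eq_mul_exp_integral_of_hasDerivWithinAt {c z : ℝ → ℂ} (hc : ContinuousOn c (Set.Icc a b))
    (hz : ∀ s ∈ Set.Icc a b, HasDerivWithinAt z (c s * z s) (Set.Icc a b) s) {s : ℝ}
    (hs : s ∈ Set.Icc a b) :
    z s = z a * Complex.exp (∫ x in a..s, c x) := by
  have hderiv : ∀ u ∈ Set.Icc a b,
      HasDerivWithinAt (fun u => z u * Complex.exp (-∫ x in a..u, c x)) 0 (Set.Icc a b) u :=
    fun u hu => ((hz u hu).mul (hasDerivWithinAt_integral_Icc_s12 hc hu).neg.cexp).congr_deriv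
      (by ring)
  have hconst : z s * Complex.exp (-∫ x in a..s, c x) = z a := by
    simpa using constant_of_has_deriv_right_zero (fun u hu => (hderiv u hu).continuousWithinAt)
      (fun u hu => (hderiv u (Set.Ico_subset_Icc_self hu)).mono_of_mem_nhdsWithin
        (Icc_mem_nhdsGE_of_mem hu)) s hs
  rw [← hconst, mul_assoc, ← Complex.exp_add, neg_add_cancel, Complex.exp_zero, mul_one]

theorem integral_odd_quintic {f : ℝ → ℝ} (hab : a ≤ b) (hf : ContinuousOn f (Set.Icc a b))
    (A B C : ℝ) :
    ∫ s in a..b, (A * f s + B * f s ^ 3 + C * f s ^ 5) =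
      A * (∫ s in a..b, f s) + B * (∫ s in a..b, f s ^ 3) + C * ∫ s in a..b, f s ^ 5 := by
  have hint : ∀ g : ℝ → ℝ, ContinuousOn g (Set.Icc a b) →
      IntervalIntegrable g MeasureTheory.volume a b :=
    fun _ hg => hg.intervalIntegrable_of_Icc hab
  rw [intervalIntegral.integral_add (hint _ (by fun_prop)) (hint _ (by fun_prop)),
    intervalIntegral.integral_add (hint _ (by fun_prop)) (hint _ (by fun_prop))]
  simp only [intervalIntegral.integral_const_mul]

end Calculus

/-- The pair `f`, `f'` solves the Duffing equation `f'' = -f³ + β f` on `[a, b]`. Derivatives are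
one-sided at the end points, so that nothing is asked of `f` outside the interval. -/
structure IsDuffingSolutionOn (β a b : ℝ) (f f' : ℝ → ℝ) : Prop where
  hasDerivWithinAt : ∀ s ∈ Set.Icc a b, HasDerivWithinAt f (f' s) (Set.Icc a b) s
  hasDerivWithinAt_velocity :
    ∀ s ∈ Set.Icc a b, HasDerivWithinAt f' (-f s ^ 3 + β * f s) (Set.Icc a b) s

/-- The total energy of a Duffing oscillator at position `x` with velocity `v`, normalized so that
the kinetic energy is `v ^ 2`. -/
noncomputable def duffingEnergy (β x v : ℝ) : ℝ := v ^ 2 - β * x ^ 2 + x ^ 4 / 2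

/-- The phase of a Duffing oscillator at position `x` with velocity `v`: a complex coordinate in
which the motion is a rotation about `0`. -/
@[simps]
noncomputable def duffingPhase (β x v : ℝ) : ℂ := ⟨x ^ 2 - β, √2 * v⟩

section Phase

variable (β x v : ℝ)

theorem sq_norm_duffingPhase : ‖duffingPhase β x v‖ ^ 2 = 2 * duffingEnergy β x v + β ^ 2 := by
  rw [Complex.sq_norm, Complex.normSq_apply, duffingPhase_re, duffingPhase_im, duffingEnergy]
  linear_combination v ^ 2 * mul_self_sqrt (zero_le_two (α := ℝ))

variable {v}

theorem arg_duffingPhase_zero_pos (hv : 0 < v) : 0 < (duffingPhase β 0 v).arg := by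
  have him : 0 < (duffingPhase β 0 v).im := by rw [duffingPhase_im]; positivity
  refine (Complex.arg_nonneg_iff.2 him.le).lt_of_ne' fun harg => ?_
  exact him.ne' (Complex.arg_eq_zero_iff.1 harg).2

theorem arg_duffingPhase_zero (hv : 0 < v) :
    (duffingPhase β 0 v).arg = 2 * arcsin √((1 + β / √(2 * v ^ 2 + β ^ 2)) / 2) := by
  have hnorm : ‖duffingPhase β 0 v‖ = √(2 * v ^ 2 + β ^ 2) := by
    rw [← sqrt_sq (norm_nonneg _), sq_norm_duffingPhase]
    simp [duffingEnergy]
  have hpos := arg_duffingPhase_zero_pos β hv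
  have hle := Complex.arg_le_pi (duffingPhase β 0 v)
  have hcos : -cos (duffingPhase β 0 v).arg = β / √(2 * v ^ 2 + β ^ 2) := by
    rw [Complex.cos_arg (fun h0 => hpos.ne' (by rw [h0, Complex.arg_zero])), hnorm, duffingPhase_re]
    ring
  rw [← hcos, ← sub_eq_add_neg, ← sin_half_eq_sqrt hpos.le (by linarith),
    arcsin_sin (by linarith) (by linarith)]
  ring

end Phase

namespace IsDuffingSolutionOn

variable {β a b s : ℝ} {f f' : ℝ → ℝ}

theorem continuousOn (h : IsDuffingSolutionOn β a b f f') : ContinuousOn f (Set.Icc a b) :=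
  fun s hs => (h.hasDerivWithinAt s hs).continuousWithinAt

theorem hasDerivWithinAt_phase (h : IsDuffingSolutionOn β a b f f') (hs : s ∈ Set.Icc a b) :
    HasDerivWithinAt (fun s => duffingPhase β (f s) (f' s))
      (-(√2 * f s : ℝ) * Complex.I * duffingPhase β (f s) (f' s)) (Set.Icc a b) s := by
  have hre := (((h.hasDerivWithinAt s hs).pow 2).sub_const β).ofReal_comp
  have him := ((h.hasDerivWithinAt_velocity s hs).const_mul √2).ofReal_comp
  simp only [duffingPhase, Complex.mk_eq_add_mul_I]
  refine (hre.add (him.mul_const Complex.I)).congr_deriv ?_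
  have hsq : (√2 : ℂ) ^ 2 = 2 := by exact_mod_cast sq_sqrt zero_le_two
  push_cast
  linear_combination f s * f' s * (√2 : ℂ) ^ 2 * Complex.I_sq - f s * f' s * hsq

theorem phase_eq (h : IsDuffingSolutionOn β a b f f') (hs : s ∈ Set.Icc a b) :
    duffingPhase β (f s) (f' s) =
      duffingPhase β (f a) (f' a) * Complex.exp (-(√2 * ∫ x in a..s, f x : ℝ) * Complex.I) := by
  have hf := h.continuousOn
  rw [eq_mul_exp_integral_of_hasDerivWithinAt (by fun_prop)
      (fun _ => h.hasDerivWithinAt_phase) hs, intervalIntegral.integral_mul_const,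
      intervalIntegral.integral_neg, intervalIntegral.integral_ofReal,
      intervalIntegral.integral_const_mul]

theorem phase_eq_norm_mul_exp (h : IsDuffingSolutionOn β a b f f') (hs : s ∈ Set.Icc a b) :
    duffingPhase β (f s) (f' s) = ‖duffingPhase β (f a) (f' a)‖ *
      Complex.exp (((duffingPhase β (f a) (f' a)).arg - √2 * ∫ x in a..s, f x : ℝ) *
        Complex.I) := by
  rw [h.phase_eq hs]
  nth_rw 1 [← Complex.norm_mul_exp_arg_mul_I (duffingPhase β (f a) (f' a))]
  rw [mul_assoc, ← Complex.exp_add, ← add_mul, Complex.ofReal_sub, ← sub_eq_add_neg]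

theorem energy_eq (h : IsDuffingSolutionOn β a b f f') (hs : s ∈ Set.Icc a b) :
    duffingEnergy β (f s) (f' s) = duffingEnergy β (f a) (f' a) := by
  have hnorm : ‖duffingPhase β (f s) (f' s)‖ = ‖duffingPhase β (f a) (f' a)‖ := by
    rw [h.phase_eq_norm_mul_exp hs, norm_mul, Complex.norm_exp_ofReal_mul_I, mul_one,
      Complex.norm_real, norm_norm]
  have hsq := congrArg (· ^ 2) hnorm
  simp only [sq_norm_duffingPhase] at hsq
  linarith

theorem integral_pow_three (h : IsDuffingSolutionOn β a b f f') (hab : a ≤ b) :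
    ∫ s in a..b, f s ^ 3 = β * (∫ s in a..b, f s) + f' a - f' b := by
  have hf := h.continuousOn
  have hint := integral_eq_sub_of_hasDerivWithinAt_Icc hab
    (fun s hs => (h.hasDerivWithinAt_velocity s hs).congr_deriv
      (by ring : _ = β * f s + (-1) * f s ^ 3 + 0 * f s ^ 5))
    (ContinuousOn.intervalIntegrable_of_Icc hab (by fun_prop))
  rw [integral_odd_quintic hab hf] at hint
  linarith

theorem integral_pow_five (h : IsDuffingSolutionOn β a b f f') (hab : a ≤ b) :
    2 * ∫ s in a..b, f s ^ 5 =
      2 * duffingEnergy β (f a) (f' a) * (∫ s in a..b, f s) + 3 * β * (∫ s in a..b, f s ^ 3)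
        + f a ^ 2 * f' a - f b ^ 2 * f' b := by
  have hf := h.continuousOn
  have hderiv : ∀ s ∈ Set.Icc a b, HasDerivWithinAt (fun s => f s ^ 2 * f' s)
      (2 * duffingEnergy β (f a) (f' a) * f s + 3 * β * f s ^ 3 + (-2) * f s ^ 5)
      (Set.Icc a b) s := by
    intro s hs
    refine (((h.hasDerivWithinAt s hs).pow 2).mul
      (h.hasDerivWithinAt_velocity s hs)).congr_deriv ?_
    rw [← h.energy_eq hs, duffingEnergy]
    simp only [Pi.pow_apply]
    push_cast
    ring
  have hint := integral_eq_sub_of_hasDerivWithinAt_Icc hab hderiv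
    (ContinuousOn.intervalIntegrable_of_Icc hab (by fun_prop))
  rw [integral_odd_quintic hab hf] at hint
  linarith

end IsDuffingSolutionOn

/-- A positive arc of the Duffing oscillator: the motion on `[a, b]` that leaves the position `0`
with velocity `v > 0` at time `a` and first returns to it at time `b`. -/
structure IsDuffingArc (β v a b : ℝ) (f f' : ℝ → ℝ) : Prop extends
    IsDuffingSolutionOn β a b f f' where
  lt : a < b
  velocity_pos : 0 < v
  left_eq_zero : f a = 0
  right_eq_zero : f b = 0
  velocity_left : f' a = v
  pos : ∀ s ∈ Set.Ioo a b, 0 < f s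

namespace IsDuffingArc

variable {β v a b s : ℝ} {f f' : ℝ → ℝ}

theorem energy_left (h : IsDuffingArc β v a b f f') : duffingEnergy β (f a) (f' a) = v ^ 2 := by
  simp [duffingEnergy, h.left_eq_zero, h.velocity_left]

theorem phase_eq_norm_mul_exp (h : IsDuffingArc β v a b f f') (hs : s ∈ Set.Icc a b) :
    duffingPhase β (f s) (f' s) = ‖duffingPhase β 0 v‖ *
      Complex.exp (((duffingPhase β 0 v).arg - √2 * ∫ x in a..s, f x : ℝ) * Complex.I) := by
  simpa only [h.left_eq_zero, h.velocity_left] using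
    h.toIsDuffingSolutionOn.phase_eq_norm_mul_exp hs

theorem cos_eq_cos_arg_iff (h : IsDuffingArc β v a b f f') (hs : s ∈ Set.Icc a b) :
    cos ((duffingPhase β 0 v).arg - √2 * ∫ x in a..s, f x) = cos (duffingPhase β 0 v).arg ↔
      f s = 0 := by
  have hre := congrArg Complex.re (h.phase_eq_norm_mul_exp hs)
  have hnorm : ‖duffingPhase β 0 v‖ ≠ 0 := norm_ne_zero_iff.2 fun h0 =>
    (arg_duffingPhase_zero_pos β h.velocity_pos).ne' (by rw [h0, Complex.arg_zero])
  rw [Complex.re_ofReal_mul, Complex.exp_ofReal_mul_I_re, duffingPhase_re] at hre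
  have h0 := Complex.norm_mul_cos_arg (duffingPhase β 0 v)
  rw [duffingPhase_re] at h0
  rw [← mul_right_inj' hnorm, ← hre, h0]
  simp

theorem sqrt_two_mul_integral_le (h : IsDuffingArc β v a b f f') :
    √2 * (∫ s in a..b, f s) ≤ 2 * (duffingPhase β 0 v).arg := by
  by_contra! hlt
  have hα := arg_duffingPhase_zero_pos β h.velocity_pos
  have hcont : ContinuousOn (fun s => √2 * ∫ x in a..s, f x) (Set.Icc a b) := fun s hs =>
    ((hasDerivWithinAt_integral_Icc_s12 h.continuousOn hs).const_mul √2).continuousWithinAt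
  obtain ⟨s, hs, hturn⟩ := intermediate_value_Ioo h.lt.le hcont
    ⟨by simpa using hα, hlt⟩
  refine (h.pos s hs).ne' ((h.cos_eq_cos_arg_iff (Set.Ioo_subset_Icc_self hs)).1 ?_)
  rw [show √2 * ∫ x in a..s, f x = _ from hturn, two_mul, sub_add_cancel_left, cos_neg]

theorem integral_eq (h : IsDuffingArc β v a b f f') :
    ∫ s in a..b, f s = √2 * (duffingPhase β 0 v).arg := by
  have hpos : 0 < √2 * ∫ s in a..b, f s := mul_pos (by positivity)
    (intervalIntegral.intervalIntegral_pos_of_pos_on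
      (h.continuousOn.intervalIntegrable_of_Icc h.lt.le) h.pos h.lt)
  have hle := h.sqrt_two_mul_integral_le
  have hπ := Complex.arg_le_pi (duffingPhase β 0 v)
  have hcos := (h.cos_eq_cos_arg_iff (Set.right_mem_Icc.2 h.lt.le)).2 h.right_eq_zero
  rw [← cos_neg, neg_sub, ← cos_abs] at hcos
  have habs : |√2 * (∫ s in a..b, f s) - (duffingPhase β 0 v).arg| = (duffingPhase β 0 v).arg :=
    have habs_le := abs_le.2 ⟨by linarith, by linarith⟩
    injOn_cos ⟨abs_nonneg _, habs_le.trans hπ⟩ ⟨(abs_nonneg _).trans habs_le, hπ⟩ hcos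
  have hturn : √2 * ∫ s in a..b, f s = 2 * (duffingPhase β 0 v).arg := by
    rcases eq_or_eq_neg_of_abs_eq habs with heq | heq <;> linarith
  refine mul_left_cancel₀ (sqrt_ne_zero'.2 zero_lt_two) (hturn.trans ?_)
  rw [← mul_assoc, mul_self_sqrt zero_le_two]

theorem velocity_right (h : IsDuffingArc β v a b f f') : f' b = -v := by
  have him := congrArg Complex.im (h.phase_eq_norm_mul_exp (Set.right_mem_Icc.2 h.lt.le))
  have hturn : (duffingPhase β 0 v).arg - √2 * ∫ s in a..b, f s = -(duffingPhase β 0 v).arg := by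
    rw [h.integral_eq, ← mul_assoc, mul_self_sqrt zero_le_two]
    ring
  rw [hturn, Complex.im_ofReal_mul, Complex.exp_ofReal_mul_I_im, sin_neg, mul_neg,
    Complex.norm_mul_sin_arg, duffingPhase_im, duffingPhase_im, ← mul_neg] at him
  exact mul_left_cancel₀ (sqrt_ne_zero'.2 zero_lt_two) him

theorem integral_pow_three (h : IsDuffingArc β v a b f f') :
    ∫ s in a..b, f s ^ 3 = β * (∫ s in a..b, f s) + 2 * v := by
  rw [h.toIsDuffingSolutionOn.integral_pow_three h.lt.le, h.velocity_left, h.velocity_right]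
  ring

theorem integral_pow_five (h : IsDuffingArc β v a b f f') :
    ∫ s in a..b, f s ^ 5 = v ^ 2 * (∫ s in a..b, f s) + 3 / 2 * β * ∫ s in a..b, f s ^ 3 := by
  have hint := h.toIsDuffingSolutionOn.integral_pow_five h.lt.le
  rw [h.energy_left, h.left_eq_zero, h.right_eq_zero] at hint
  linarith

end IsDuffingArc

theorem quadratic_functional_value_general {R v a b : ℝ} {f f' : ℝ → ℝ} (t : ℝ)
    (h : IsDuffingArc (-(R - 8) / 2) v a b f f') :
    (2 * π ^ 2 / v) *
        ∫ s in a..b, f s *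
          ((R ^ 2 - 12 * (f s) ^ 2 * R + 144 * (f' s) ^ 2 + 36 * (f s) ^ 4) / 3 + t * R ^ 2)
      = (2 * π ^ 2 / v) *
          (72 * v ^ 2 + ((6 * t + 59) / 3) * R ^ 2 - 272 * R + 960) * √2 *
          arcsin √((1 + -(R - 8) / 2 / √(2 * v ^ 2 + (-(R - 8) / 2) ^ 2)) / 2)
        - 4 * π ^ 2 * (19 * R - 120) := by
  have hquintic : ∀ s ∈ Set.uIcc a b, f s *
      ((R ^ 2 - 12 * (f s) ^ 2 * R + 144 * (f' s) ^ 2 + 36 * (f s) ^ 4) / 3 + t * R ^ 2) =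
      (R ^ 2 / 3 + t * R ^ 2 + 48 * v ^ 2) * f s + (192 - 28 * R) * f s ^ 3
        + (-12) * f s ^ 5 := by
    intro s hs
    rw [Set.uIcc_of_le h.lt.le] at hs
    have henergy := (h.energy_eq hs).trans h.energy_left
    rw [duffingEnergy] at henergy
    linear_combination 48 * f s * henergy
  have hv := h.velocity_pos
  rw [intervalIntegral.integral_congr hquintic, integral_odd_quintic h.lt.le h.continuousOn,
    h.integral_pow_five, h.integral_pow_three, h.integral_eq,
    arg_duffingPhase_zero _ hv]
  field_simp
  ring

theorem IsDuffingSolution.isDuffingArc {m : ℕ} {β T : ℝ} {f : ℝ → ℝ} (hm : 0 < m)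
    (h : IsDuffingSolution m β T f) : IsDuffingArc β m (-T) T f (deriv f) := by
  obtain ⟨hT, hf, hode, hl, hr, hdl, -, hpos⟩ := h
  exact {
    hasDerivWithinAt := fun s _ =>
      (hf.differentiable (by simp) s).hasDerivAt.hasDerivWithinAt
    hasDerivWithinAt_velocity := fun s hs => hode s hs ▸
      ((hf.iterate_deriv 1).differentiable (by simp) s).hasDerivAt.hasDerivWithinAt
    lt := by linarith
    velocity_pos := by exact_mod_cast hm
    left_eq_zero := hl
    right_eq_zero := hr
    velocity_left := hdl
    pos := hpos }

/-- Value of the quadratic curvature functional `B_t` at the metric `g_m(R)`. -/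
theorem quadratic_functional_value (m : ℕ) (hm : 0 < m) (R t T : ℝ) (f : ℝ → ℝ)
    (h : IsDuffingSolution m (-(R - 8) / 2) T f) :
    (2 * π ^ 2 / (m : ℝ)) *
        ∫ s in (-T)..T, f s *
          ((R ^ 2 - 12 * (f s) ^ 2 * R + 144 * (deriv f s) ^ 2 + 36 * (f s) ^ 4) / 3
            + t * R ^ 2)
      = (2 * π ^ 2 / (m : ℝ)) *
          (72 * (m : ℝ) ^ 2 + ((6 * t + 59) / 3) * R ^ 2 - 272 * R + 960) *
          Real.sqrt 2 * Real.arcsin (duffingModulus m (-(R - 8) / 2))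
        - 4 * π ^ 2 * (19 * R - 120) :=
  quadratic_functional_value_general t (h.isDuffingArc hm)
end
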